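/- Let s ≥ 1 and let g, h : ℝ^d → ℂ be measurable functions such that for every N > 0 there is C > 0 with |g(ζ)| ≤ C·exp(−N·|ζ|^{1/s}) and |h(ζ)| ≤ C·exp(−N·|ζ|^{1/s}) for all ζ ∈ ℝ^d. Then for every N > 0 there is C' > 0 with |(g*h)(ξ)| ≤ C'·exp(−N·|ξ|^{1/s}) for all ξ ∈ ℝ^d. Consequently, since ℱ(φψ) = (2π)^{−d/2}·(φ̂ * ψ̂) for smooth compactly supported φ, ψ, the pointwise product of two s-cutoffs is again an s-cutoff. -/

import Mathlib

open MeasureTheory Complex Set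
open scoped ENNReal RealInnerProductSpace NNReal

noncomputable section

namespace Paper

variable {d : ℕ}

/-- The Fourier transform, normalized by `(2π)^{-d/2}`. -/
def FT (f : EuclideanSpace ℝ (Fin d) → ℂ) (ξ : EuclideanSpace ℝ (Fin d)) : ℂ :=
  ((2 * Real.pi) ^ (-(d : ℝ) / 2) : ℝ) *
    ∫ x, f x * Complex.exp (-(⟪x, ξ⟫ : ℝ) * Complex.I)

/-- The short-time Fourier transform `V_φ f (x, ξ)`. -/
def STFT (φ f : EuclideanSpace ℝ (Fin d) → ℂ) (x ξ : EuclideanSpace ℝ (Fin d)) : ℂ :=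
  ((2 * Real.pi) ^ (-(d : ℝ) / 2) : ℝ) *
    ∫ y, f y * (starRingEnd ℂ) (φ (y - x)) * Complex.exp (-(⟪ξ, y⟫ : ℝ) * Complex.I)

/-- A cone in `ℝ^d ∖ {0}`. -/
def IsCone (Γ : Set (EuclideanSpace ℝ (Fin d))) : Prop :=
  (0 : EuclideanSpace ℝ (Fin d)) ∉ Γ ∧ ∀ ξ ∈ Γ, ∀ t : ℝ, 0 < t → t • ξ ∈ Γ

/-- An `s`-cutoff: smooth, compactly supported, with Fourier transform decaying faster
than every `exp (-N |ξ|^{1/s})`. -/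
def IsSCutoff (s : ℝ) (φ : EuclideanSpace ℝ (Fin d) → ℂ) : Prop :=
  ContDiff ℝ (⊤ : ℕ∞) φ ∧ HasCompactSupport φ ∧
    ∀ N : ℝ, 0 < N → ∃ C : ℝ, 0 < C ∧
      ∀ ξ, ‖FT φ ξ‖ ≤ C * Real.exp (-N * ‖ξ‖ ^ (1 / s))

/-- An `s`-admissible weight: positive, measurable, and moderate with respect to an even
submultiplicative weight of sub-exponential growth of order `1/s`. -/
def IsSAdmissible (s : ℝ) (ω : EuclideanSpace ℝ (Fin d) → ℝ) : Prop :=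
  Measurable ω ∧ (∀ x, 0 < ω x) ∧
    ∃ v : EuclideanSpace ℝ (Fin d) → ℝ, Measurable v ∧ (∀ x, 0 < v x) ∧
      (∀ x, v (-x) = v x) ∧ (∀ x y, v (x + y) ≤ v x * v y) ∧
      ∃ C₀ k₀ C₁ : ℝ, 0 < C₀ ∧ 0 < k₀ ∧ 0 < C₁ ∧
        (∀ ξ, v ξ ≤ C₀ * Real.exp (k₀ * ‖ξ‖ ^ (1 / s))) ∧
        ∀ x y, ω (x + y) ≤ C₁ * v x * ω y

/-- The Fourier–Lebesgue seminorm `( ∫_Γ (|f̂| ω)^q )^{1/q}` (ess-sup when `q = ∞`). -/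
def FLSemi (ω : EuclideanSpace ℝ (Fin d) → ℝ) (q : ℝ≥0∞)
    (f : EuclideanSpace ℝ (Fin d) → ℂ) (Γ : Set (EuclideanSpace ℝ (Fin d))) : ℝ≥0∞ :=
  eLpNorm (fun ξ => ‖FT f ξ‖ * ω ξ) q (volume.restrict Γ)

/-- The Fourier–Lebesgue wave-front set `WF_{FL^q_ω} f`. -/
def WF_FL (s : ℝ) (q : ℝ≥0∞) (ω : EuclideanSpace ℝ (Fin d) → ℝ)
    (f : EuclideanSpace ℝ (Fin d) → ℂ) :
    Set (EuclideanSpace ℝ (Fin d) × EuclideanSpace ℝ (Fin d)) :=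
  {z | z.2 ≠ 0 ∧ ∀ φ : EuclideanSpace ℝ (Fin d) → ℂ, IsSCutoff s φ → φ z.1 ≠ 0 →
    ∀ Γ : Set (EuclideanSpace ℝ (Fin d)), IsOpen Γ → IsCone Γ → z.2 ∈ Γ →
      FLSemi ω q (fun x => φ x * f x) Γ = ∞}

/-- The `s`-wave-front set `WF_s f`. -/
def WFs (s : ℝ) (f : EuclideanSpace ℝ (Fin d) → ℂ) :
    Set (EuclideanSpace ℝ (Fin d) × EuclideanSpace ℝ (Fin d)) :=
  {z | z.2 ≠ 0 ∧ ¬ ∃ φ : EuclideanSpace ℝ (Fin d) → ℂ, IsSCutoff s φ ∧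
    (∃ U : Set (EuclideanSpace ℝ (Fin d)), IsOpen U ∧ z.1 ∈ U ∧ ∀ x ∈ U, φ x = 1) ∧
    ∃ Γ : Set (EuclideanSpace ℝ (Fin d)), IsOpen Γ ∧ IsCone Γ ∧ z.2 ∈ Γ ∧
      ∃ C k : ℝ, 0 < C ∧ 0 < k ∧
        ∀ ξ ∈ Γ, ‖FT (fun x => φ x * f x) ξ‖ ≤ C * Real.exp (-k * ‖ξ‖ ^ (1 / s))}

/-- The mixed modulation-space seminorm
`( ∫_Γ ( ∫ |V_g F(x,ξ)|^p dx )^{q/p} ω(ξ)^q dξ )^{1/q}` with the usual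
ess-sup interpretations for `p = ∞` or `q = ∞`. -/
def ModSemi (g F : EuclideanSpace ℝ (Fin d) → ℂ) (ω : EuclideanSpace ℝ (Fin d) → ℝ)
    (p q : ℝ≥0∞) (Γ : Set (EuclideanSpace ℝ (Fin d))) : ℝ≥0∞ :=
  if q = ∞ then
    essSup (fun ξ => eLpNorm (fun x => STFT g F x ξ) p volume * ENNReal.ofReal (ω ξ))
      (volume.restrict Γ)
  else
    (∫⁻ ξ in Γ, (eLpNorm (fun x => STFT g F x ξ) p volume * ENNReal.ofReal (ω ξ)) ^ q.toReal) ^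
      (1 / q.toReal)

/-- The modulation wave-front set `WF_{M^{p,q}_ω} f`, with window `g`. -/
def WF_M (s : ℝ) (p q : ℝ≥0∞) (ω : EuclideanSpace ℝ (Fin d) → ℝ)
    (g f : EuclideanSpace ℝ (Fin d) → ℂ) :
    Set (EuclideanSpace ℝ (Fin d) × EuclideanSpace ℝ (Fin d)) :=
  {z | z.2 ≠ 0 ∧ ∀ φ : EuclideanSpace ℝ (Fin d) → ℂ, IsSCutoff s φ → φ z.1 ≠ 0 →
    ∀ Γ : Set (EuclideanSpace ℝ (Fin d)), IsOpen Γ → IsCone Γ → z.2 ∈ Γ →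
      ModSemi g (fun x => φ x * f x) ω p q Γ = ∞}

/-- Reinterpret a plain vector as a point of Euclidean space. -/
def toE (x : Fin d → ℝ) : EuclideanSpace ℝ (Fin d) :=
  (EuclideanSpace.equiv (Fin d) ℝ).symm x

/-- The point `A k` of the lattice `A(ℤ^d)`. -/
def latPt (A : Matrix (Fin d) (Fin d) ℝ) (k : Fin d → ℤ) : EuclideanSpace ℝ (Fin d) :=
  toE (A.mulVec fun i => (k i : ℝ))

/-- The point `c (Aᵀ)⁻¹ k` of the dual lattice `c (Aᵀ)⁻¹(ℤ^d)`. -/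
def dualLatPt (A : Matrix (Fin d) (Fin d) ℝ) (c : ℝ) (k : Fin d → ℤ) :
    EuclideanSpace ℝ (Fin d) :=
  toE (c • (A.transpose⁻¹.mulVec fun i => (k i : ℝ)))

/-- The parallelepiped `x₁ + A([0,1]^d)`. -/
def lattPara (A : Matrix (Fin d) (Fin d) ℝ) (x₁ : EuclideanSpace ℝ (Fin d)) :
    Set (EuclideanSpace ℝ (Fin d)) :=
  (fun t : Fin d → ℝ => x₁ + toE (A.mulVec t)) '' (Set.univ.pi fun _ => Set.Icc 0 1)

/-- The adjoint short-time Fourier transform `V*_φ F`. -/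
def VStar (φ : EuclideanSpace ℝ (Fin d) → ℂ)
    (F : EuclideanSpace ℝ (Fin d) × EuclideanSpace ℝ (Fin d) → ℂ)
    (t : EuclideanSpace ℝ (Fin d)) : ℂ :=
  ((2 * Real.pi) ^ (-(d : ℝ) / 2) : ℝ) *
    ∫ z : EuclideanSpace ℝ (Fin d) × EuclideanSpace ℝ (Fin d),
      F z * Complex.exp ((⟪z.2, t⟫ : ℝ) * Complex.I) * φ (t - z.1)

/-! For `p = 1 / s` one has `|ξ|^p ≤ 2^p (|ξ - η|^p + |η|^p)`. So if `h` decays at rate `2^p N + 1`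
and `g` at rate `2^p N`, then `|g (ξ - η) h η| ≤ C exp (-N |ξ|^p) exp (-|η|^p)`; the surplus
`exp (-|η|^p)` in the rate of `h` makes the integral over `η` converge. The exponent `p` may be
any positive number. For the second claim, self-adjointness of the Fourier transform and Fourier
inversion give `ℱ(φψ) = (2π)^{-d/2} (φ̂ * ψ̂)`. -/

theorem add_rpow_le_two_rpow_mul_add_rpow {a b p : ℝ} (ha : 0 ≤ a) (hb : 0 ≤ b) (hp : 0 ≤ p) :
    (a + b) ^ p ≤ 2 ^ p * (a ^ p + b ^ p) := by
  lift a to ℝ≥0 using ha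
  lift b to ℝ≥0 using hb
  have h := ENNReal.add_rpow_le_two_rpow_mul_rpow_add_rpow a b hp
  rw [← ENNReal.coe_ofNat, ← ENNReal.coe_add, ← ENNReal.coe_rpow_of_nonneg _ hp,
    ← ENNReal.coe_rpow_of_nonneg _ hp, ← ENNReal.coe_rpow_of_nonneg _ hp,
    ← ENNReal.coe_rpow_of_nonneg _ hp] at h
  exact_mod_cast h

section RapidExpDecay

open scoped Convolution

variable {𝕜 E F F' G : Type*} [NormedAddCommGroup E] [NormedAddCommGroup F]
  [NormedAddCommGroup F'] [NormedAddCommGroup G] {p : ℝ}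

/-- Decay faster than every `exp (-N |x|^p)`; the decay condition on the Fourier transform of an
`s`-cutoff is the case `p = 1 / s`. -/
def RapidExpDecay (p : ℝ) (f : E → F) : Prop :=
  ∀ N : ℝ, 0 < N → ∃ C : ℝ, 0 < C ∧ ∀ x, ‖f x‖ ≤ C * Real.exp (-N * ‖x‖ ^ p)

theorem RapidExpDecay.const_smul [NormedField 𝕜] [NormedSpace 𝕜 F] {f : E → F}
    (hf : RapidExpDecay p f) (c : 𝕜) : RapidExpDecay p (fun x => c • f x) := by
  intro N hN
  obtain ⟨C, hC, hfC⟩ := hf N hN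
  refine ⟨(‖c‖ + 1) * C, by positivity, fun x => ?_⟩
  rw [norm_smul, mul_assoc]
  exact mul_le_mul (lt_add_one _).le (hfC x) (norm_nonneg _) (by positivity)

theorem norm_rpow_le_two_rpow_mul_norm_sub_rpow_add (hp : 0 ≤ p) (x t : E) :
    ‖x‖ ^ p ≤ 2 ^ p * (‖x - t‖ ^ p + ‖t‖ ^ p) :=
  calc ‖x‖ ^ p ≤ (‖x - t‖ + ‖t‖) ^ p :=
        Real.rpow_le_rpow (norm_nonneg _) (norm_le_norm_sub_add x t) hp
    _ ≤ 2 ^ p * (‖x - t‖ ^ p + ‖t‖ ^ p) :=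
        add_rpow_le_two_rpow_mul_add_rpow (norm_nonneg _) (norm_nonneg _) hp

theorem RapidExpDecay.exists_norm_convolution_integrand_le [NontriviallyNormedField 𝕜]
    [NormedSpace 𝕜 F] [NormedSpace 𝕜 F'] [NormedSpace 𝕜 G] {f : E → F} {g : E → F'}
    (L : F →L[𝕜] F' →L[𝕜] G) (hf : RapidExpDecay p f) (hg : RapidExpDecay p g) (hp : 0 ≤ p)
    {N : ℝ} (hN : 0 < N) :
    ∃ C : ℝ, 0 < C ∧ ∀ x t,
      ‖L (f t) (g (x - t))‖ ≤ C * Real.exp (-N * ‖x‖ ^ p) * Real.exp (-‖t‖ ^ p) := by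
  obtain ⟨A, hA, hfA⟩ := hf (2 ^ p * N + 1) (by positivity)
  obtain ⟨B, hB, hgB⟩ := hg (2 ^ p * N) (by positivity)
  refine ⟨(‖L‖ + 1) * A * B, by positivity, fun x t => ?_⟩
  have exponent_le : -(2 ^ p * N + 1) * ‖t‖ ^ p + -(2 ^ p * N) * ‖x - t‖ ^ p
      ≤ -N * ‖x‖ ^ p + -‖t‖ ^ p := by
    linarith [mul_le_mul_of_nonneg_left (norm_rpow_le_two_rpow_mul_norm_sub_rpow_add hp x t) hN.le]
  calc ‖L (f t) (g (x - t))‖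
      ≤ ‖L‖ * ‖f t‖ * ‖g (x - t)‖ := L.le_opNorm₂ _ _
    _ ≤ (‖L‖ + 1) * (A * Real.exp (-(2 ^ p * N + 1) * ‖t‖ ^ p)) *
          (B * Real.exp (-(2 ^ p * N) * ‖x - t‖ ^ p)) := by
        gcongr
        exacts [(lt_add_one _).le, hfA t, hgB (x - t)]
    _ = (‖L‖ + 1) * A * B *
          Real.exp (-(2 ^ p * N + 1) * ‖t‖ ^ p + -(2 ^ p * N) * ‖x - t‖ ^ p) := by
        rw [Real.exp_add]
        ring
    _ ≤ (‖L‖ + 1) * A * B * Real.exp (-N * ‖x‖ ^ p + -‖t‖ ^ p) := by gcongr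
    _ = (‖L‖ + 1) * A * B * Real.exp (-N * ‖x‖ ^ p) * Real.exp (-‖t‖ ^ p) := by
        rw [Real.exp_add, ← mul_assoc]

variable [NormedSpace ℝ E] [FiniteDimensional ℝ E] [MeasurableSpace E] [BorelSpace E]
  (μ : Measure E) [μ.IsAddHaarMeasure]

theorem integrable_exp_neg_norm_rpow (hp : 0 < p) :
    Integrable (fun x : E => Real.exp (-‖x‖ ^ p)) μ := by
  rcases subsingleton_or_nontrivial E with _ | _
  · exact .of_finite
  · refine (integrable_fun_norm_addHaar μ (f := fun r : ℝ => Real.exp (-r ^ p))).mpr ?_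
    have hdim : (-1 : ℝ) < (Module.finrank ℝ E - 1 : ℕ) :=
      neg_one_lt_zero.trans_le (Nat.cast_nonneg _)
    simpa only [Real.rpow_natCast, smul_eq_mul] using integrableOn_rpow_mul_exp_neg_rpow hdim hp

variable {μ} [NontriviallyNormedField 𝕜] [NormedSpace 𝕜 F] [NormedSpace 𝕜 F'] [NormedSpace 𝕜 G]
  {f : E → F} {g : E → F'} (L : F →L[𝕜] F' →L[𝕜] G)

theorem RapidExpDecay.convolutionExists (hf : RapidExpDecay p f) (hg : RapidExpDecay p g)
    (hp : 0 < p) (hfm : AEStronglyMeasurable f μ) (hgm : AEStronglyMeasurable g μ) :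
    ConvolutionExists f g L μ := by
  intro x
  obtain ⟨C, -, hC⟩ := hf.exists_norm_convolution_integrand_le L hg hp.le one_pos
  exact ((integrable_exp_neg_norm_rpow μ hp).const_mul _).mono'
    (hfm.convolution_integrand_snd L hgm x) (.of_forall (hC x))

theorem RapidExpDecay.convolution [NormedSpace ℝ G] (hf : RapidExpDecay p f)
    (hg : RapidExpDecay p g) (hp : 0 < p) : RapidExpDecay p (f ⋆[L, μ] g) := by
  intro N hN
  obtain ⟨C, hC, hbound⟩ := hf.exists_norm_convolution_integrand_le L hg hp.le hN
  have hint := integrable_exp_neg_norm_rpow μ hp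
  refine ⟨C * ∫ t, Real.exp (-‖t‖ ^ p) ∂μ, mul_pos hC (integral_exp_pos hint), fun x => ?_⟩
  calc ‖(f ⋆[L, μ] g) x‖
      ≤ ∫ t, C * Real.exp (-N * ‖x‖ ^ p) * Real.exp (-‖t‖ ^ p) ∂μ :=
        norm_integral_le_of_norm_le (hint.const_mul _) (.of_forall (hbound x))
    _ = C * (∫ t, Real.exp (-‖t‖ ^ p) ∂μ) * Real.exp (-N * ‖x‖ ^ p) := by
        rw [integral_const_mul]
        ring

end RapidExpDecay

section Fourier

open FourierTransform

variable {V F : Type*} [NormedAddCommGroup V] [InnerProductSpace ℝ V] [FiniteDimensional ℝ V]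
  [MeasurableSpace V] [BorelSpace V] [NormedAddCommGroup F] [NormedSpace ℂ F]

theorem fourier_sub_eq_fourierInv_smul (f : V → F) (ξ η : V) :
    𝓕 f (ξ - η) = 𝓕⁻ (fun x => Real.fourierChar (-⟪x, ξ⟫) • f x) η := by
  rw [Real.fourier_eq, Real.fourierInv_eq]
  refine integral_congr_ae (.of_forall fun x => ?_)
  simp only [smul_smul, ← AddChar.map_add_eq_mul, inner_sub_right, neg_sub, sub_eq_add_neg ⟪x, η⟫]

theorem integral_fourierInv_smul_eq [CompleteSpace F] {f : V → ℂ} {g : V → F} (hf : Integrable f)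
    (hg : Integrable g) : ∫ ξ, 𝓕⁻ f ξ • g ξ = ∫ x, f x • 𝓕⁻ g x := by
  have flip_neg_inner : (-innerₗ V).flip = -innerₗ V := by
    ext x y
    simp [real_inner_comm]
  have h := VectorFourier.integral_fourierIntegral_smul_eq_flip (L := -innerₗ V)
    Real.continuous_fourierChar continuous_inner.neg hf hg
  rwa [flip_neg_inner] at h

theorem fourier_smul_eq_integral [CompleteSpace F] {f : V → ℂ} {g : V → F} (hf : Integrable f)
    (hg : Integrable g) (hgc : Continuous g) (hFg : Integrable (𝓕 g)) (ξ : V) :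
    𝓕 (fun x => f x • g x) ξ = ∫ η, 𝓕 f (ξ - η) • 𝓕 g η := by
  have hmod : Integrable (fun x => Real.fourierChar (-⟪x, ξ⟫) • f x) :=
    (Real.fourierIntegral_convergent_iff ξ).2 hf
  calc 𝓕 (fun x => f x • g x) ξ
      = ∫ x, (Real.fourierChar (-⟪x, ξ⟫) • f x) • 𝓕⁻ (𝓕 g) x := by
        rw [hgc.fourierInv_fourier_eq hg hFg, Real.fourier_eq]
        simp only [smul_assoc]
    _ = ∫ η, 𝓕 f (ξ - η) • 𝓕 g η := by
        simp only [fourier_sub_eq_fourierInv_smul, integral_fourierInv_smul_eq hmod hFg]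

theorem FT_eq_mul_fourier (f : EuclideanSpace ℝ (Fin d) → ℂ) (ξ : EuclideanSpace ℝ (Fin d)) :
    FT f ξ = ((2 * Real.pi) ^ (-(d : ℝ) / 2) : ℝ) * 𝓕 f ((2 * Real.pi)⁻¹ • ξ) := by
  rw [FT, Real.fourier_eq']
  congr 1
  refine integral_congr_ae (.of_forall fun x => ?_)
  have phase_eq : -2 * Real.pi * ⟪x, (2 * Real.pi)⁻¹ • ξ⟫ = -⟪x, ξ⟫ := by
    rw [inner_smul_right]
    field_simp
  beta_reduce
  rw [phase_eq, Complex.ofReal_neg, smul_eq_mul, mul_comm]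

theorem FT_mul_eq_integral {f g : EuclideanSpace ℝ (Fin d) → ℂ} (hf : Integrable f)
    (hg : Integrable g) (hgc : Continuous g) (hFg : Integrable (𝓕 g))
    (ξ : EuclideanSpace ℝ (Fin d)) :
    FT (fun x => f x * g x) ξ =
      ((2 * Real.pi) ^ (-(d : ℝ) / 2) : ℝ) * ∫ η, FT f (ξ - η) * FT g η := by
  set c : ℝ := (2 * Real.pi) ^ (-(d : ℝ) / 2) with hc
  have hπ : 0 < 2 * Real.pi := Real.two_pi_pos
  have hc_sq : c * c * (2 * Real.pi) ^ d = 1 := by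
    rw [hc, ← Real.rpow_natCast, ← Real.rpow_add hπ, ← Real.rpow_add hπ]
    ring_nf
    exact Real.rpow_zero _
  let H (η : EuclideanSpace ℝ (Fin d)) : ℂ := 𝓕 f ((2 * Real.pi)⁻¹ • ξ - η) * 𝓕 g η
  have integral_H : ∫ η, FT f (ξ - η) * FT g η = ∫ η, H η := by
    calc ∫ η, FT f (ξ - η) * FT g η
        = ∫ η, ((c * c : ℝ) : ℂ) * H ((2 * Real.pi)⁻¹ • η) := by
          refine integral_congr_ae (.of_forall fun η => ?_)
          simp only [FT_eq_mul_fourier, H, smul_sub]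
          push_cast
          ring
      _ = ((c * c * (2 * Real.pi) ^ d : ℝ) : ℂ) * ∫ η, H η := by
          rw [integral_const_mul, Measure.integral_comp_inv_smul_of_nonneg volume H hπ.le,
            finrank_euclideanSpace_fin, Complex.real_smul, Complex.ofReal_mul (c * c), mul_assoc]
      _ = ∫ η, H η := by rw [hc_sq, Complex.ofReal_one, one_mul]
  rw [integral_H, FT_eq_mul_fourier]
  congr 1
  exact fourier_smul_eq_integral hf hg hgc hFg _

theorem integrable_fourier_of_contDiff_of_hasCompactSupport {f : V → F}
    (hf : ContDiff ℝ (⊤ : ℕ∞) f) (hf' : HasCompactSupport f) : Integrable (𝓕 f) :=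
  (𝓕 (hf'.toSchwartzMap hf)).integrable

end Fourier

theorem IsSCutoff.mul {s : ℝ} (hs : 0 < s) {φ ψ : EuclideanSpace ℝ (Fin d) → ℂ}
    (hφ : IsSCutoff s φ) (hψ : IsSCutoff s ψ) : IsSCutoff s (fun x => φ x * ψ x) := by
  obtain ⟨hφ_smooth, hφ_supp, hφ_decay⟩ := hφ
  obtain ⟨hψ_smooth, hψ_supp, hψ_decay⟩ := hψ
  refine ⟨hφ_smooth.mul hψ_smooth, hφ_supp.mul_right, ?_⟩
  have FT_mul := FT_mul_eq_integral
    (hφ_smooth.continuous.integrable_of_hasCompactSupport hφ_supp)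
    (hψ_smooth.continuous.integrable_of_hasCompactSupport hψ_supp) hψ_smooth.continuous
    (integrable_fourier_of_contDiff_of_hasCompactSupport hψ_smooth hψ_supp)
  have decay : RapidExpDecay (1 / s) (fun ξ => ∫ η, FT φ (ξ - η) * FT ψ η) :=
    RapidExpDecay.convolution (ContinuousLinearMap.mul ℝ ℂ).flip hψ_decay hφ_decay
      (one_div_pos.2 hs)
  rw [funext FT_mul]
  exact decay.const_smul (𝕜 := ℂ) _

theorem stmt4_general {s : ℝ} (hs : 0 < s) {g h : EuclideanSpace ℝ (Fin d) → ℂ}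
    (hg : AEStronglyMeasurable g) (hh : AEStronglyMeasurable h)
    (hgdec : RapidExpDecay (1 / s) g) (hhdec : RapidExpDecay (1 / s) h) :
    ((∀ ξ, Integrable (fun η => g (ξ - η) * h η)) ∧
      RapidExpDecay (1 / s) (fun ξ => ∫ η, g (ξ - η) * h η)) ∧
    ∀ φ ψ : EuclideanSpace ℝ (Fin d) → ℂ, IsSCutoff s φ → IsSCutoff s ψ →
      IsSCutoff s (fun x => φ x * ψ x) := by
  have hp : 0 < 1 / s := one_div_pos.2 hs
  let L := (ContinuousLinearMap.mul ℝ ℂ).flip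
  exact ⟨⟨hhdec.convolutionExists L hgdec hp hh hg, hhdec.convolution L hgdec hp⟩,
    fun _ _ => IsSCutoff.mul hs⟩

theorem stmt4 {d : ℕ} (s : ℝ) (hs : 1 ≤ s)
    (g h : EuclideanSpace ℝ (Fin d) → ℂ) (hg : Measurable g) (hh : Measurable h)
    (hgdec : ∀ N : ℝ, 0 < N → ∃ C : ℝ, 0 < C ∧
      ∀ ζ, ‖g ζ‖ ≤ C * Real.exp (-N * ‖ζ‖ ^ (1 / s)))
    (hhdec : ∀ N : ℝ, 0 < N → ∃ C : ℝ, 0 < C ∧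
      ∀ ζ, ‖h ζ‖ ≤ C * Real.exp (-N * ‖ζ‖ ^ (1 / s))) :
    (∀ N : ℝ, 0 < N → ∃ C' : ℝ, 0 < C' ∧
      ∀ ξ, ‖∫ η, g (ξ - η) * h η‖ ≤ C' * Real.exp (-N * ‖ξ‖ ^ (1 / s))) ∧
    ∀ φ ψ : EuclideanSpace ℝ (Fin d) → ℂ, IsSCutoff s φ → IsSCutoff s ψ →
      IsSCutoff s (fun x => φ x * ψ x) := by
  obtain ⟨⟨-, hconv⟩, hmul⟩ := stmt4_general (by positivity) hg.aestronglyMeasurable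
    hh.aestronglyMeasurable hgdec hhdec
  exact ⟨hconv, hmul⟩

end Paper
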